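/- Let N ≥ 3, μ₁ < N-2 and -(N-2-μ₁)²/4 ≤ μ₂ < 0. Let Ω ⊂ ℝ^N be a bounded domain containing the origin, let θ > -2 and let Q ∈ C^β_loc(ℝ^N \ {0}) for some β ∈ (0,1) be a positive function with liminf_{|x|→0⁺} Q(x)|x|^{-θ} > 0. Set τ₊ = ((2-N+μ₁) + √((2-N+μ₁)² + 4μ₂))/2 (which is negative) and p^# = 1 + (2+θ)/(-τ₊). Then for every p ≥ p^# there is no positive function u ∈ C²(Ω \ {0}) satisfying ℒ_{μ₁,μ₂}u(x) ≥ Q(x)·u(x)^p for all x ∈ Ω \ {0} together with u ≥ 0 on ∂Ω. -/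

import Mathlib

open MeasureTheory Filter Metric Set Topology

noncomputable section

/-- Euclidean space `ℝ^N`. -/
abbrev E (N : ℕ) := EuclideanSpace ℝ (Fin N)

/-- The Laplacian, as the sum of second derivatives in the coordinate directions. -/
def lap (N : ℕ) (u : E N → ℝ) (x : E N) : ℝ :=
  ∑ i, fderiv ℝ (fun y => fderiv ℝ u y (EuclideanSpace.single i 1)) x (EuclideanSpace.single i 1)

/-- The CKN operator `ℒ_{μ₁,μ₂} u = -Δu + μ₁|x|⁻² x·∇u + μ₂|x|⁻² u`. -/
def ckn (N : ℕ) (μ₁ μ₂ : ℝ) (u : E N → ℝ) (x : E N) : ℝ :=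
  -lap N u x + μ₁ / ‖x‖ ^ 2 * fderiv ℝ u x x + μ₂ / ‖x‖ ^ 2 * u x

/-- `τ₊(μ₁,μ₂)`. -/
def tauPlus (N : ℕ) (μ₁ μ₂ : ℝ) : ℝ :=
  ((2 - (N : ℝ) + μ₁) + Real.sqrt ((2 - (N : ℝ) + μ₁) ^ 2 + 4 * μ₂)) / 2

/-- `τ₋(μ₁,μ₂)`. -/
def tauMinus (N : ℕ) (μ₁ μ₂ : ℝ) : ℝ :=
  ((2 - (N : ℝ) + μ₁) - Real.sqrt ((2 - (N : ℝ) + μ₁) ^ 2 + 4 * μ₂)) / 2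

/-- Surface measure of the unit sphere `𝕊^{N-1}` in `ℝ^N`. -/
def sphereArea (N : ℕ) : ℝ := N * (volume (ball (0 : E N) 1)).toReal

/-- Local β-Hölder continuity of `f` on a set `s`. -/
def LocHolderOn (N : ℕ) (β : ℝ) (f : E N → ℝ) (s : Set (E N)) : Prop :=
  ∀ x ∈ s, ∃ t ∈ nhdsWithin x s, ∃ C : NNReal, HolderOnWith C β.toNNReal f t

/-!
In the Emden–Fowler variables `t = -log |x|`, `u(x) = |x|^b w(t)` with `b = τ₊`, the equation
`ℒ u = c |x|^θ u^p` for radial `u` becomes `w'' - κ w' + c e^{-σ t} w^p = 0` with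
`κ = 2 τ₊ + N - 2 - μ₁ ≥ 0` and `σ = θ + 2 + τ₊ (p - 1)`, and `p ≥ p^#` says exactly that `σ ≤ 0`.
For a general supersolution take for `w` the transform of the minimum of `u` over spheres: a
function of `t` touching `w` from below gives a radial function touching `u` from below at a point
of minimum, so `w` is a viscosity supersolution of `w'' - κ w' + c w^p = 0` near `+∞`.
Such a positive `w` does not exist. Linear barriers show that it is nondecreasing; a concave
parabola gives `w(a + ℓ) ≥ w(a) + (c ℓ² / 4) w(a)^p`, so `w` grows with unbounded ratios
`w(a + ℓ) / w(a)` since `p > 1`; a convex parabola gives `w(a + 2ℓ) ≤ 4 w(a + ℓ)`, a contradiction.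
-/

section EmdenFowler

lemma exists_succ_gt_mul_of_add_rpow_le_succ {η K p : ℝ} {a : ℕ → ℝ} (hη : 0 < η) (hp : 1 < p)
    (ha : ∀ n, 0 < a n) (hstep : ∀ n, a n + η * a n ^ p ≤ a (n + 1)) :
    ∃ n, K * a n < a (n + 1) := by
  by_contra! hK
  have hmono : Monotone a := monotone_nat_of_le_succ fun n => by
    linarith [hstep n, mul_pos hη (Real.rpow_pos_of_pos (ha n) p)]
  rcases tendsto_atTop_of_monotone hmono with htop | ⟨l, hl⟩
  · have hbound (n : ℕ) : a n ^ (p - 1) ≤ (K - 1) / η := by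
      have hpow : a n ^ p = a n ^ (p - 1) * a n := by
        rw [← Real.rpow_add_one (ha n).ne', sub_add_cancel]
      rw [le_div_iff₀ hη]
      refine le_of_mul_le_mul_right ?_ (ha n)
      linear_combination hstep n + hK n - η * hpow
    obtain ⟨n, hn⟩ := (((tendsto_rpow_atTop (sub_pos.2 hp)).comp htop).eventually_gt_atTop
      ((K - 1) / η)).exists
    exact (hbound n).not_gt hn
  · have hl_pos : 0 < l := (ha 0).trans_le (hmono.ge_of_tendsto hl 0)
    have hlim : l + η * l ^ p ≤ l :=
      le_of_tendsto_of_tendsto' (hl.add ((hl.rpow_const (Or.inl hl_pos.ne')).const_mul η))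
        (hl.comp (tendsto_add_atTop_nat 1)) hstep
    linarith [mul_pos hη (Real.rpow_pos_of_pos hl_pos p)]

/-- `w` is a positive continuous viscosity supersolution of the Emden–Fowler equation
`w'' - κ w' + c w ^ p = 0` on the half-line `[T, ∞)`: every `C²` function touching `w` from below
at an interior point satisfies the differential inequality there. -/
structure IsEmdenSupersolution (κ c p T : ℝ) (w : ℝ → ℝ) : Prop where
  continuousOn : ContinuousOn w (Ici T)
  pos : ∀ t, T ≤ t → 0 < w t
  touch : ∀ (h : ℝ → ℝ) (t : ℝ), ContDiff ℝ 2 h → T < t → h t = w t → (∀ᶠ s in 𝓝 t, h s ≤ w s) →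
    deriv (deriv h) t - κ * deriv h t + c * w t ^ p ≤ 0

namespace IsEmdenSupersolution

variable {κ c p T : ℝ} {w : ℝ → ℝ}

lemma le_of_subsolution (hw : IsEmdenSupersolution κ c p T w) {h : ℝ → ℝ} {a b : ℝ}
    (hh : ContDiff ℝ 2 h) (hTa : T ≤ a) (ha : h a ≤ w a) (hb : h b ≤ w b)
    (hsub : ∀ t ∈ Ioo a b, 0 < deriv (deriv h) t - κ * deriv h t + c * w t ^ p) {t : ℝ}
    (ht : t ∈ Icc a b) : h t ≤ w t := by
  have hcont : ContinuousOn (fun s => w s - h s) (Icc a b) :=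
    (hw.continuousOn.mono fun s hs => hTa.trans hs.1).sub hh.continuous.continuousOn
  obtain ⟨m, hm, hmin⟩ := isCompact_Icc.exists_isMinOn ⟨t, ht⟩ hcont
  have hmin_le {s : ℝ} (hs : s ∈ Icc a b) : w m - h m ≤ w s - h s := hmin hs
  suffices 0 ≤ w m - h m by linarith [hmin_le ht]
  rcases eq_endpoints_or_mem_Ioo_of_mem_Icc hm with rfl | rfl | hm'
  · exact sub_nonneg.2 ha
  · exact sub_nonneg.2 hb
  · have htouch := hw.touch (fun s => h s + (w m - h m)) m (hh.add contDiff_const)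
      (hTa.trans_lt hm'.1) (by ring) <| by
        filter_upwards [Icc_mem_nhds hm'.1 hm'.2] with s hs using by linarith [hmin_le hs]
    simp only [deriv_add_const'] at htouch
    exact absurd (hsub m hm') htouch.not_gt

lemma quadratic_le (hw : IsEmdenSupersolution κ c p T w) {α β γ a b : ℝ} (hTa : T ≤ a)
    (ha : α ≤ w a) (hb : α + β * (b - a) + γ * (b - a) ^ 2 ≤ w b)
    (hsub : ∀ t ∈ Ioo a b, 0 < 2 * γ - κ * (β + 2 * γ * (t - a)) + c * w t ^ p) {t : ℝ}
    (ht : t ∈ Icc a b) : α + β * (t - a) + γ * (t - a) ^ 2 ≤ w t := by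
  refine hw.le_of_subsolution (h := fun s => α + β * (s - a) + γ * (s - a) ^ 2) (by fun_prop) hTa
    (by simpa using ha) hb (fun s hs => ?_) ht
  have hderiv : deriv (fun s => α + β * (s - a) + γ * (s - a) ^ 2) =
      fun s => β + 2 * γ * (s - a) := by
    ext s
    have hlin : HasDerivAt (fun s => s - a) 1 s := (hasDerivAt_id s).sub_const a
    refine HasDerivAt.deriv (HasDerivAt.congr_deriv
      (((hlin.const_mul β).const_add α).add ((hlin.pow 2).const_mul γ)) ?_)
    push_cast
    ring
  have hderiv2 : deriv (fun s => β + 2 * γ * (s - a)) s = 2 * γ := by simp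
  rw [hderiv, hderiv2]
  exact hsub s hs

lemma monotoneOn (hw : IsEmdenSupersolution κ c p T w) (hκ : 0 ≤ κ) (hc : 0 < c) :
    MonotoneOn w (Ici T) := by
  intro a ha b hb hab
  by_contra! hlt
  have hab' : a < b := hab.lt_of_ne fun h => hlt.ne (by rw [h])
  have hwb := hw.pos b hb
  -- The line through `(a, w a)` of slope `-δ` lies above `w` at `b` and vanishes at `a + w a / δ`.
  set δ := (w a - w b) / (2 * (b - a)) with hδ_def
  have hδ : 0 < δ := div_pos (by linarith) (by linarith)
  have hδ_mul : δ * (b - a) = (w a - w b) / 2 := by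
    rw [hδ_def]
    field_simp [(sub_pos.2 hab').ne']
  have hzero : δ * (w a / δ) = w a := mul_div_cancel₀ _ hδ.ne'
  have hb_le : b ≤ a + w a / δ := by
    rw [← sub_le_iff_le_add', le_div_iff₀ hδ]
    linarith
  have hline := hw.quadratic_le (α := w a) (β := -δ) (γ := 0) (b := a + w a / δ) ha le_rfl
    (by linarith [hw.pos _ (le_trans hb hb_le)])
    (fun t ht => by
      linarith [mul_nonneg hκ hδ.le,
        mul_pos hc (Real.rpow_pos_of_pos (hw.pos t (le_trans ha ht.1.le)) p)])
    ⟨hab, hb_le⟩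
  linarith

lemma add_mul_rpow_le (hw : IsEmdenSupersolution κ c p T w) (hκ : 0 ≤ κ) (hc : 0 < c)
    (hp : 0 ≤ p) {a ℓ : ℝ} (ha : T ≤ a) (hℓ : 0 < ℓ) (hκℓ : 2 * κ * ℓ ≤ 1) :
    w a + c * ℓ ^ 2 / 4 * w a ^ p ≤ w (a + ℓ) := by
  have hmono := hw.monotoneOn hκ hc
  have hwa := hw.pos a ha
  have hε : 0 < c / 4 * w a ^ p := mul_pos (by linarith) (Real.rpow_pos_of_pos hwa p)
  set ε := c / 4 * w a ^ p with hε_def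
  have hbarrier := hw.quadratic_le (α := w a) (β := 2 * ℓ * ε) (γ := -ε) (a := a)
    (b := a + 2 * ℓ) (t := a + ℓ) ha le_rfl
    (by linarith [hmono ha (show T ≤ a + 2 * ℓ by linarith) (by linarith)])
    (fun t ht => by
      have hwt : w a ^ p ≤ w t ^ p :=
        Real.rpow_le_rpow hwa.le (hmono ha (le_trans ha ht.1.le) ht.1.le) hp
      have hκt : κ * (a + ℓ - t) ≤ 1 / 2 := by nlinarith [mul_nonneg hκ (sub_nonneg.2 ht.1.le)]
      linarith [mul_le_mul_of_nonneg_left hwt hc.le, mul_le_mul_of_nonneg_left hκt hε.le])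
    ⟨by linarith, by linarith⟩
  linear_combination hbarrier + ℓ ^ 2 * hε_def

lemma le_four_mul (hw : IsEmdenSupersolution κ c p T w) (hκ : 0 ≤ κ) (hc : 0 < c) {a ℓ : ℝ}
    (ha : T ≤ a) (hℓ : 0 < ℓ) (hκℓ : 2 * κ * ℓ ≤ 1) : w (a + 2 * ℓ) ≤ 4 * w (a + ℓ) := by
  set ε := w (a + 2 * ℓ) / (2 * ℓ) ^ 2
  have hε : 0 < ε := div_pos (hw.pos _ (by linarith)) (by positivity)
  have hε_mul : ε * (2 * ℓ) ^ 2 = w (a + 2 * ℓ) := div_mul_cancel₀ _ (by positivity)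
  have hbarrier := hw.quadratic_le (α := 0) (β := 0) (γ := ε) (a := a) (b := a + 2 * ℓ)
    (t := a + ℓ) ha (hw.pos a ha).le (by linarith)
    (fun t ht => by
      have hκt : κ * (t - a) ≤ 1 := by nlinarith [mul_le_mul_of_nonneg_left ht.2.le hκ]
      linarith [mul_le_mul_of_nonneg_left hκt hε.le,
        mul_pos hc (Real.rpow_pos_of_pos (hw.pos t (ha.trans ht.1.le)) p)])
    ⟨by linarith, by linarith⟩
  linarith

end IsEmdenSupersolution

theorem not_isEmdenSupersolution {κ c p : ℝ} (hκ : 0 ≤ κ) (hc : 0 < c) (hp : 1 < p) (T : ℝ)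
    (w : ℝ → ℝ) : ¬ IsEmdenSupersolution κ c p T w := by
  intro hw
  obtain ⟨ℓ, hℓ, hκℓ⟩ : ∃ ℓ : ℝ, 0 < ℓ ∧ 2 * κ * ℓ ≤ 1 :=
    ⟨1 / (2 * κ + 1), by positivity, by rw [mul_one_div, div_le_one (by positivity)]; linarith⟩
  have hT (n : ℕ) : T ≤ T + n * ℓ := le_add_of_nonneg_right (by positivity)
  have hsucc (n : ℕ) : T + (n + 1 : ℕ) * ℓ + ℓ = T + n * ℓ + ℓ + ℓ := by push_cast; ring
  obtain ⟨n, hn⟩ := exists_succ_gt_mul_of_add_rpow_le_succ (η := c * ℓ ^ 2 / 4) (K := 4)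
    (a := fun n : ℕ => w (T + n * ℓ + ℓ)) (by positivity) hp
    (fun n => hw.pos _ (by linarith [hT n]))
    (fun n => by
      rw [hsucc]
      exact hw.add_mul_rpow_le hκ hc (by linarith) (by linarith [hT n]) hℓ hκℓ)
  have hdouble := hw.le_four_mul hκ hc (hT n) hℓ hκℓ
  rw [two_mul, ← add_assoc] at hdouble
  rw [hsucc] at hn
  exact hn.not_ge hdouble

end EmdenFowler

section SecondDerivativeTest

lemma deriv_deriv_nonneg_of_isLocalMin {f : ℝ → ℝ} {a : ℝ} (hmin : IsLocalMin f a)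
    (hf : ContinuousAt f a) : 0 ≤ deriv (deriv f) a := by
  by_contra! hneg
  have hmax : IsLocalMax f a := isLocalMax_of_deriv_deriv_neg hneg hmin.deriv_eq_zero hf
  have hconst : f =ᶠ[𝓝 a] fun _ => f a := by
    filter_upwards [hmin, hmax] with t hge hle using le_antisymm hle hge
  have hzero : deriv (deriv f) a = 0 := by
    rw [hconst.deriv.deriv_eq]
    simp
  exact hneg.ne hzero

variable {V : Type*} [NormedAddCommGroup V] [NormedSpace ℝ V] {f : V → ℝ} {x : V}

lemma differentiableAt_fderiv_apply (hf : ContDiffAt ℝ 2 f x) (v : V) :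
    DifferentiableAt ℝ (fun y => fderiv ℝ f y v) x :=
  ((hf.fderiv_right (m := 1) (by norm_num)).differentiableAt one_ne_zero).clm_apply
    (differentiableAt_const v)

lemma eventually_differentiableAt (hf : ContDiffAt ℝ 2 f x) :
    ∀ᶠ y in 𝓝 x, DifferentiableAt ℝ f y :=
  (hf.eventually (by simp)).mono fun _ hy => hy.differentiableAt two_ne_zero

lemma fderiv_fderiv_apply_nonneg_of_isLocalMin (hf : ContDiffAt ℝ 2 f x) (hmin : IsLocalMin f x)
    (v : V) : 0 ≤ fderiv ℝ (fun y => fderiv ℝ f y v) x v := by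
  let line : ℝ → V := fun t => x + t • v
  have hline (t : ℝ) : HasDerivAt line v t := by
    simpa [line] using ((hasDerivAt_id t).smul_const v).const_add x
  have hline_zero : line 0 = x := by simp [line]
  have htendsto : Tendsto line (𝓝 0) (𝓝 x) := hline_zero ▸ (hline 0).continuousAt.tendsto
  have hderiv : deriv (f ∘ line) =ᶠ[𝓝 0] (fun y => fderiv ℝ f y v) ∘ line :=
    (htendsto.eventually (eventually_differentiableAt hf)).mono fun t ht =>
      (ht.hasFDerivAt.comp_hasDerivAt t (hline t)).deriv
  have hderiv2 : deriv (deriv (f ∘ line)) 0 = fderiv ℝ (fun y => fderiv ℝ f y v) x v := by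
    rw [hderiv.deriv_eq]
    exact ((differentiableAt_fderiv_apply hf v).hasFDerivAt.comp_hasDerivAt_of_eq 0 (hline 0)
      hline_zero.symm).deriv
  rw [← hderiv2]
  refine deriv_deriv_nonneg_of_isLocalMin ?_ (ContinuousAt.comp ?_ (hline 0).continuousAt)
  · filter_upwards [htendsto.eventually hmin] with t ht
    simpa [hline_zero] using ht
  · rw [hline_zero]
    exact hf.continuousAt

end SecondDerivativeTest

section Comparison

variable {N : ℕ} {u v : E N → ℝ} {x : E N}

lemma lap_nonneg_of_isLocalMin (hu : ContDiffAt ℝ 2 u x) (hmin : IsLocalMin u x) :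
    0 ≤ lap N u x :=
  Finset.sum_nonneg fun _ _ => fderiv_fderiv_apply_nonneg_of_isLocalMin hu hmin _

lemma lap_sub (hu : ContDiffAt ℝ 2 u x) (hv : ContDiffAt ℝ 2 v x) :
    lap N (fun y => u y - v y) x = lap N u x - lap N v x := by
  rw [lap, lap, lap, ← Finset.sum_sub_distrib]
  refine Finset.sum_congr rfl fun i _ => ?_
  set e : E N := EuclideanSpace.single i 1
  have hfderiv : (fun y => fderiv ℝ (fun z => u z - v z) y e) =ᶠ[𝓝 x]
      fun y => fderiv ℝ u y e - fderiv ℝ v y e := by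
    filter_upwards [eventually_differentiableAt hu, eventually_differentiableAt hv] with y huy hvy
    rw [fderiv_fun_sub huy hvy, sub_apply]
  rw [hfderiv.fderiv_eq, fderiv_fun_sub (differentiableAt_fderiv_apply hu e)
    (differentiableAt_fderiv_apply hv e), sub_apply]

lemma ckn_le_ckn_of_touch (μ₁ μ₂ : ℝ) (hu : ContDiffAt ℝ 2 u x) (hv : ContDiffAt ℝ 2 v x)
    (heq : v x = u x) (hle : ∀ᶠ y in 𝓝 x, v y ≤ u y) : ckn N μ₁ μ₂ u x ≤ ckn N μ₁ μ₂ v x := by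
  have hmin : IsLocalMin (fun y => u y - v y) x := by
    filter_upwards [hle] with y hy
    rw [heq, sub_self]
    exact sub_nonneg.2 hy
  have hlap := lap_nonneg_of_isLocalMin (hu.sub hv) hmin
  rw [lap_sub hu hv] at hlap
  have hgrad : fderiv ℝ u x = fderiv ℝ v x := by
    rw [← sub_eq_zero, ← fderiv_fun_sub (hu.differentiableAt two_ne_zero)
      (hv.differentiableAt two_ne_zero)]
    exact hmin.fderiv_eq_zero
  rw [ckn, ckn, hgrad, heq]
  linarith

end Comparison

section Radial

/-- The radial function `x ↦ |x|^b h(-log |x|)`, the inverse of the Emden–Fowler substitution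
`t = -log |x|`. -/
def emdenFowler {V : Type*} [Norm V] (b : ℝ) (h : ℝ → ℝ) (x : V) : ℝ :=
  ‖x‖ ^ b * h (-Real.log ‖x‖)

variable {V : Type*} [NormedAddCommGroup V] [InnerProductSpace ℝ V] {x : V} {b : ℝ} {h : ℝ → ℝ}

lemma contDiffAt_emdenFowler {n : WithTop ℕ∞} (hx : x ≠ 0) (hh : ContDiff ℝ n h) :
    ContDiffAt ℝ n (emdenFowler b h) x := by
  have hnorm : ContDiffAt ℝ n (fun y : V => ‖y‖) x := contDiffAt_norm ℝ hx
  have hx' : ‖x‖ ≠ 0 := norm_ne_zero_iff.2 hx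
  exact (hnorm.rpow_const_of_ne hx').mul (hh.contDiffAt.comp x (hnorm.log hx').neg)

lemma hasFDerivAt_norm (hx : x ≠ 0) : HasFDerivAt (fun y : V => ‖y‖) (‖x‖⁻¹ • innerSL ℝ x) x := by
  have hsq := (hasStrictFDerivAt_norm_sq x).hasFDerivAt.sqrt (by positivity)
  simp only [Real.sqrt_sq (norm_nonneg _)] at hsq
  convert hsq using 1
  ext y
  simp only [smul_apply, coe_innerSL_apply, smul_eq_mul, one_div, mul_inv_rev, nsmul_eq_mul,
    Nat.cast_ofNat]
  field_simp

lemma hasFDerivAt_emdenFowler (hx : x ≠ 0) (hh : Differentiable ℝ h) :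
    HasFDerivAt (emdenFowler b h)
      (emdenFowler (b - 2) (fun t => b * h t - deriv h t) x • innerSL ℝ x) x := by
  have hx' : 0 < ‖x‖ := norm_pos_iff.2 hx
  have hprofile : HasDerivAt (fun r : ℝ => r ^ b * h (-Real.log r))
      (‖x‖ ^ (b - 1) * (b * h (-Real.log ‖x‖) - deriv h (-Real.log ‖x‖))) ‖x‖ := by
    have hpow : ‖x‖ ^ b = ‖x‖ ^ (b - 1) * ‖x‖ := by
      rw [← Real.rpow_add_one hx'.ne', sub_add_cancel]
    refine ((Real.hasDerivAt_rpow_const (Or.inl hx'.ne')).mul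
      ((hh _).hasDerivAt.comp ‖x‖ (Real.hasDerivAt_log hx'.ne').neg)).congr_deriv ?_
    rw [hpow]
    simp only [Function.comp_apply, Pi.neg_apply]
    field_simp
    ring
  refine (hprofile.comp_hasFDerivAt x (hasFDerivAt_norm hx)).congr_fderiv ?_
  have hpow : ‖x‖ ^ (b - 1) = ‖x‖ ^ (b - 2) * ‖x‖ := by
    rw [← Real.rpow_add_one hx'.ne']
    ring_nf
  rw [smul_smul, hpow, emdenFowler]
  congr 1
  field_simp

lemma fderiv_fderiv_emdenFowler (hx : x ≠ 0) (hh : ContDiff ℝ 2 h) (v : V) :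
    fderiv ℝ (fun y => fderiv ℝ (emdenFowler b h) y v) x v =
      ‖x‖ ^ (b - 4) * ((b - 2) * (b * h (-Real.log ‖x‖) - deriv h (-Real.log ‖x‖))
        - (b * deriv h (-Real.log ‖x‖) - deriv (deriv h) (-Real.log ‖x‖))) * inner ℝ x v ^ 2
      + ‖x‖ ^ (b - 2) * (b * h (-Real.log ‖x‖) - deriv h (-Real.log ‖x‖)) * ‖v‖ ^ 2 := by
  have hh1 : Differentiable ℝ h := hh.differentiable two_ne_zero
  have hh2 : Differentiable ℝ (deriv h) := hh.differentiable_deriv_two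
  set k : ℝ → ℝ := fun t => b * h t - deriv h t with hk
  have hk_diff : Differentiable ℝ k := (hh1.const_mul b).sub hh2
  have hk_deriv (t : ℝ) : deriv k t = b * deriv h t - deriv (deriv h) t := by
    rw [hk, deriv_fun_sub ((hh1 t).const_mul b) (hh2 t), deriv_const_mul _ (hh1 t)]
  have hfirst : (fun y => fderiv ℝ (emdenFowler b h) y v) =ᶠ[𝓝 x]
      fun y => emdenFowler (b - 2) k y * inner ℝ y v := by
    filter_upwards [isOpen_ne.mem_nhds hx] with y hy
    simp [(hasFDerivAt_emdenFowler hy hh1).fderiv, hk]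
  have hinner : HasFDerivAt (fun y : V => inner ℝ y v) (innerSL ℝ v) x := by
    simp only [real_inner_comm v]
    exact (innerSL ℝ v).hasFDerivAt
  rw [hfirst.fderiv_eq, ((hasFDerivAt_emdenFowler hx hk_diff).fun_mul hinner).fderiv]
  simp only [emdenFowler, hk_deriv, add_apply, smul_apply,
    innerSL_apply_apply, real_inner_self_eq_norm_sq, smul_eq_mul]
  simp only [hk]
  ring_nf

variable {N : ℕ} {y : E N}

lemma lap_emdenFowler (hy : y ≠ 0) (hh : ContDiff ℝ 2 h) :
    lap N (emdenFowler b h) y = ‖y‖ ^ (b - 2) * (deriv (deriv h) (-Real.log ‖y‖)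
      - (2 * b + N - 2) * deriv h (-Real.log ‖y‖) + b * (b + N - 2) * h (-Real.log ‖y‖)) := by
  have hpow : ‖y‖ ^ (b - 2) = ‖y‖ ^ (b - 4) * ‖y‖ ^ 2 := by
    rw [← Real.rpow_add_natCast (norm_ne_zero_iff.2 hy)]
    congr 1
    push_cast
    ring
  have hsum : ∑ i, inner ℝ y (EuclideanSpace.single i (1 : ℝ)) ^ 2 = ‖y‖ ^ 2 := by
    simp [EuclideanSpace.inner_single_right, EuclideanSpace.real_norm_sq_eq]
  simp only [lap, fderiv_fderiv_emdenFowler hy hh, Finset.sum_add_distrib, ← Finset.mul_sum, hsum]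
  simp only [PiLp.norm_single, norm_one, one_pow, Finset.sum_const, Finset.card_univ,
    Fintype.card_fin, nsmul_eq_mul, mul_one, hpow]
  ring

lemma ckn_emdenFowler (μ₁ μ₂ : ℝ) (hy : y ≠ 0) (hh : ContDiff ℝ 2 h) :
    ckn N μ₁ μ₂ (emdenFowler b h) y = -‖y‖ ^ (b - 2) * (deriv (deriv h) (-Real.log ‖y‖)
      - (2 * b + N - 2 - μ₁) * deriv h (-Real.log ‖y‖)
      + (b ^ 2 + (N - 2 - μ₁) * b - μ₂) * h (-Real.log ‖y‖)) := by
  have hpow : ‖y‖ ^ b = ‖y‖ ^ (b - 2) * ‖y‖ ^ 2 := by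
    rw [← Real.rpow_add_natCast (norm_ne_zero_iff.2 hy)]
    congr 1
    push_cast
    ring
  have hy' : ‖y‖ ≠ 0 := norm_ne_zero_iff.2 hy
  rw [ckn, lap_emdenFowler hy hh,
    (hasFDerivAt_emdenFowler hy (hh.differentiable two_ne_zero)).fderiv]
  simp only [emdenFowler, hpow, smul_apply, innerSL_apply_apply,
    real_inner_self_eq_norm_sq, smul_eq_mul]
  field_simp
  ring

end Radial

section SphereMin

variable {V : Type*} [NormedAddCommGroup V]

/-- The minimum of `u` over the sphere of radius `r` centred at the origin, encoded as an infimum: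
it is a minimum when the sphere is compact and nonempty and `u` is continuous on it. -/
def sphereMin (u : V → ℝ) (r : ℝ) : ℝ :=
  sInf (u '' sphere 0 r)

variable [ProperSpace V] {u : V → ℝ} {r : ℝ} {x : V}

lemma sphereMin_norm_le (hu : ContinuousOn u (sphere 0 ‖x‖)) : sphereMin u ‖x‖ ≤ u x :=
  csInf_le ((isCompact_sphere 0 ‖x‖).image_of_continuousOn hu).bddBelow
    (mem_image_of_mem u (mem_sphere_zero_iff_norm.2 rfl))

variable [NormedSpace ℝ V]

lemma exists_norm_eq_and_sphereMin_eq [Nontrivial V] (hr : 0 ≤ r)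
    (hu : ContinuousOn u (sphere 0 r)) : ∃ x, ‖x‖ = r ∧ sphereMin u r = u x := by
  obtain ⟨x, hx, hmin⟩ := (isCompact_sphere 0 r).exists_sInf_image_eq
    (NormedSpace.sphere_nonempty.2 hr) hu
  exact ⟨x, mem_sphere_zero_iff_norm.1 hx, hmin⟩

lemma continuousOn_sphereMin {R : ℝ} (hu : ContinuousOn u (closedBall 0 R \ {0})) :
    ContinuousOn (sphereMin u) (Ioc 0 R) := by
  let scaled : Ioc 0 R → sphere (0 : V) 1 → ℝ := fun r ω => u ((r : ℝ) • (ω : V))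
  have hscaled : Continuous ↿scaled := by
    refine hu.comp_continuous (f := fun q : Ioc 0 R × sphere (0 : V) 1 => (q.1 : ℝ) • (q.2 : V))
      (by fun_prop) fun ⟨r, ω⟩ => ⟨?_, ?_⟩
    · simpa [norm_smul, abs_of_pos r.2.1] using r.2.2
    · simpa using ⟨r.2.1.ne', ne_zero_of_mem_unit_sphere ω⟩
  have hsphereMin (r : Ioc 0 R) : sInf (scaled r '' univ) = sphereMin u r := by
    have hsphere : sphere (0 : V) r = (fun ω => (r : ℝ) • ω) '' sphere 0 1 := by
      rw [image_smul, smul_sphere' r.2.1.ne', smul_zero, mul_one, Real.norm_of_nonneg r.2.1.le]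
    rw [image_univ, sphereMin, hsphere, image_image, image_eq_range]
  rw [continuousOn_iff_continuous_domRestrict]
  exact (isCompact_univ.continuous_sInf hscaled).congr hsphereMin

end SphereMin

section EmdenProfile

lemma exp_neg_mem_Ioc {T t : ℝ} (ht : T ≤ t) : Real.exp (-t) ∈ Ioc 0 (Real.exp (-T)) :=
  ⟨Real.exp_pos _, Real.exp_le_exp.2 (neg_le_neg ht)⟩

variable {V : Type*} [NormedAddCommGroup V]

/-- The Emden–Fowler transform `t ↦ r ^ (-b) m(r)`, `r = exp (-t)`, of the spherical minimum `m`
of `u`. -/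
def emdenProfile (b : ℝ) (u : V → ℝ) (t : ℝ) : ℝ :=
  Real.exp (b * t) * sphereMin u (Real.exp (-t))

lemma rpow_mul_emdenProfile {r : ℝ} (b : ℝ) (u : V → ℝ) (hr : 0 < r) :
    r ^ b * emdenProfile b u (-Real.log r) = sphereMin u r := by
  rw [emdenProfile, neg_neg, Real.exp_log hr, ← mul_assoc, Real.rpow_def_of_pos hr,
    ← Real.exp_add]
  simp [mul_comm]

lemma sphere_subset_closedBall_diff_zero {r R : ℝ} (hr : r ∈ Ioc 0 R) :
    sphere (0 : V) r ⊆ closedBall 0 R \ {0} := fun _ hx =>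
  ⟨closedBall_subset_closedBall hr.2 (sphere_subset_closedBall hx), ne_of_mem_sphere hx hr.1.ne'⟩

variable {b T : ℝ} {h : ℝ → ℝ}

lemma emdenFowler_le_of_le_emdenProfile [ProperSpace V] {u : V → ℝ} {x : V} (hx : x ≠ 0)
    (hu : ContinuousOn u (sphere 0 ‖x‖))
    (hle : h (-Real.log ‖x‖) ≤ emdenProfile b u (-Real.log ‖x‖)) : emdenFowler b h x ≤ u x :=
  calc emdenFowler b h x ≤ ‖x‖ ^ b * emdenProfile b u (-Real.log ‖x‖) := by
        rw [emdenFowler]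
        gcongr
    _ = sphereMin u ‖x‖ := rpow_mul_emdenProfile b u (norm_pos_iff.2 hx)
    _ ≤ u x := sphereMin_norm_le hu

lemma eventually_emdenFowler_le_of_eventually_le_emdenProfile [ProperSpace V] {u : V → ℝ} {x : V}
    (hx : x ≠ 0) (hT : T < -Real.log ‖x‖)
    (hu : ContinuousOn u (closedBall 0 (Real.exp (-T)) \ {0}))
    (hle : ∀ᶠ s in 𝓝 (-Real.log ‖x‖), h s ≤ emdenProfile b u s) :
    ∀ᶠ y in 𝓝 x, emdenFowler b h y ≤ u y := by
  have hlog : Tendsto (fun y : V => -Real.log ‖y‖) (𝓝 x) (𝓝 (-Real.log ‖x‖)) :=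
    (continuous_norm.continuousAt.log (norm_ne_zero_iff.2 hx)).neg.tendsto
  filter_upwards [hlog.eventually hle, hlog.eventually (lt_mem_nhds hT), isOpen_ne.mem_nhds hx]
    with y hy hTy hy0
  have hy_pos : 0 < ‖y‖ := norm_pos_iff.2 hy0
  have hy_le : ‖y‖ ≤ Real.exp (-T) := (Real.log_le_iff_le_exp hy_pos).1 (by linarith)
  exact emdenFowler_le_of_le_emdenProfile hy0
    (hu.mono (sphere_subset_closedBall_diff_zero ⟨hy_pos, hy_le⟩)) hy

lemma rpow_sub_two_mul_rpow_le {r θ b p W : ℝ} (hr : 0 < r) (hr1 : r ≤ 1) (hW : 0 ≤ W)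
    (hcrit : θ + 2 + b * (p - 1) ≤ 0) : r ^ (b - 2) * W ^ p ≤ r ^ θ * (r ^ b * W) ^ p := by
  rw [Real.mul_rpow (by positivity) hW, ← Real.rpow_mul hr.le, ← mul_assoc, ← Real.rpow_add hr]
  gcongr ?_ * _
  exact Real.rpow_le_rpow_of_exponent_ge hr hr1 (by linarith)

variable {N : ℕ} {μ₁ μ₂ c θ p : ℝ} {u : E N → ℝ}

lemma deriv_deriv_sub_add_nonpos_of_emdenFowler_touch {x : E N}
    (hb : b ^ 2 + (N - 2 - μ₁) * b - μ₂ = 0) (hcrit : θ + 2 + b * (p - 1) ≤ 0) (hc : 0 < c)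
    (hx : x ≠ 0) (hx1 : ‖x‖ ≤ 1) (hu : ContDiffAt ℝ 2 u x) (hpos : 0 < u x)
    (hineq : c * ‖x‖ ^ θ * u x ^ p ≤ ckn N μ₁ μ₂ u x) (hh : ContDiff ℝ 2 h)
    (heq : emdenFowler b h x = u x) (hle : ∀ᶠ y in 𝓝 x, emdenFowler b h y ≤ u y) :
    deriv (deriv h) (-Real.log ‖x‖) - (2 * b + N - 2 - μ₁) * deriv h (-Real.log ‖x‖)
      + c * h (-Real.log ‖x‖) ^ p ≤ 0 := by
  have hr : 0 < ‖x‖ := norm_pos_iff.2 hx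
  have hh_pos : 0 < h (-Real.log ‖x‖) := by
    rw [← heq, emdenFowler] at hpos
    exact pos_of_mul_pos_right hpos (by positivity)
  have hckn := hineq.trans (ckn_le_ckn_of_touch μ₁ μ₂ hu (contDiffAt_emdenFowler hx hh) heq hle)
  rw [ckn_emdenFowler μ₁ μ₂ hx hh, hb, zero_mul, add_zero, ← heq, emdenFowler, mul_assoc] at hckn
  have hscale := mul_le_mul_of_nonneg_left (rpow_sub_two_mul_rpow_le hr hx1 hh_pos.le hcrit) hc.le
  refine nonpos_of_mul_nonpos_right ?_ (Real.rpow_pos_of_pos hr (b - 2))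
  linarith

theorem isEmdenSupersolution_emdenProfile (hN : 0 < N)
    (hb : b ^ 2 + (N - 2 - μ₁) * b - μ₂ = 0) (hcrit : θ + 2 + b * (p - 1) ≤ 0) (hc : 0 < c)
    (hT : 0 ≤ T) (hu : ∀ x ∈ closedBall 0 (Real.exp (-T)) \ {0}, ContDiffAt ℝ 2 u x)
    (hpos : ∀ x ∈ closedBall 0 (Real.exp (-T)) \ {0}, 0 < u x)
    (hineq : ∀ x ∈ closedBall 0 (Real.exp (-T)) \ {0},
      c * ‖x‖ ^ θ * u x ^ p ≤ ckn N μ₁ μ₂ u x) :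
    IsEmdenSupersolution (2 * b + N - 2 - μ₁) c p T (emdenProfile b u) := by
  have : Nonempty (Fin N) := ⟨0, hN⟩
  have hcont : ContinuousOn u (closedBall 0 (Real.exp (-T)) \ {0}) := fun x hx =>
    (hu x hx).continuousAt.continuousWithinAt
  have hmin {t : ℝ} (ht : T ≤ t) : ∃ x ∈ closedBall 0 (Real.exp (-T)) \ {0},
      ‖x‖ = Real.exp (-t) ∧ sphereMin u (Real.exp (-t)) = u x := by
    have hsub := sphere_subset_closedBall_diff_zero (V := E N) (exp_neg_mem_Ioc ht)
    obtain ⟨x, hx, hux⟩ := exists_norm_eq_and_sphereMin_eq (Real.exp_pos (-t)).le (hcont.mono hsub)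
    exact ⟨x, hsub (mem_sphere_zero_iff_norm.2 hx), hx, hux⟩
  refine ⟨?_, fun t ht => ?_, fun h t hh ht heq hle => ?_⟩
  · exact (by fun_prop : Continuous fun t => Real.exp (b * t)).continuousOn.mul
      ((continuousOn_sphereMin hcont).comp (by fun_prop) fun t ht => exp_neg_mem_Ioc ht)
  · obtain ⟨x, hx, -, hux⟩ := hmin ht
    rw [emdenProfile, hux]
    exact mul_pos (Real.exp_pos _) (hpos x hx)
  · obtain ⟨x, hx, hxt, hux⟩ := hmin ht.le
    obtain rfl : -Real.log ‖x‖ = t := by rw [hxt, Real.log_exp, neg_neg]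
    have hx1 : ‖x‖ ≤ 1 := (mem_closedBall_zero_iff.1 hx.1).trans (by simpa using hT)
    have htouch : emdenFowler b h x = u x := by
      rw [emdenFowler, heq, rpow_mul_emdenProfile b u (norm_pos_iff.2 hx.2), hxt, hux]
    rw [← heq]
    exact deriv_deriv_sub_add_nonpos_of_emdenFowler_touch hb hcrit hc hx.2 hx1 (hu x hx)
      (hpos x hx) (hineq x hx) hh htouch
      (eventually_emdenFowler_le_of_eventually_le_emdenProfile hx.2 ht hcont hle)

end EmdenProfile

section Exponents

variable {N : ℕ} {μ₁ μ₂ : ℝ}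

lemma tauPlus_neg (hμ₁ : μ₁ < (N : ℝ) - 2) (hμ₂ : μ₂ < 0) : tauPlus N μ₁ μ₂ < 0 := by
  have hsqrt : √((2 - (N : ℝ) + μ₁) ^ 2 + 4 * μ₂) < N - 2 - μ₁ :=
    (Real.sqrt_lt' (by linarith)).2 (by linarith)
  rw [tauPlus]
  linarith

lemma two_mul_tauPlus_nonneg : 0 ≤ 2 * tauPlus N μ₁ μ₂ + N - 2 - μ₁ := by
  rw [tauPlus]
  linarith [Real.sqrt_nonneg ((2 - (N : ℝ) + μ₁) ^ 2 + 4 * μ₂)]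

lemma tauPlus_isRoot (hμ₂ : -((N : ℝ) - 2 - μ₁) ^ 2 / 4 ≤ μ₂) :
    tauPlus N μ₁ μ₂ ^ 2 + (N - 2 - μ₁) * tauPlus N μ₁ μ₂ - μ₂ = 0 := by
  have hsq := Real.sq_sqrt (show 0 ≤ (2 - (N : ℝ) + μ₁) ^ 2 + 4 * μ₂ by linarith)
  rw [tauPlus]
  linear_combination hsq / 4

lemma one_lt_and_add_mul_nonpos_of_le {τ θ p : ℝ} (hτ : τ < 0) (hθ : -2 < θ)
    (hp : 1 + (2 + θ) / (-τ) ≤ p) : 1 < p ∧ θ + 2 + τ * (p - 1) ≤ 0 := by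
  have hτ' : 0 < -τ := neg_pos.2 hτ
  have hcrit : (2 + θ) / (-τ) ≤ p - 1 := le_sub_iff_add_le'.2 hp
  refine ⟨sub_pos.1 ((div_pos (by linarith) hτ').trans_le hcrit), ?_⟩
  rw [div_le_iff₀ hτ'] at hcrit
  linarith

end Exponents

lemma exists_forall_closedBall_exp_neg_of_eventually {V : Type*} [NormedAddCommGroup V]
    {P : V → Prop} (hP : ∀ᶠ x in 𝓝[≠] 0, P x) :
    ∃ T : ℝ, 0 ≤ T ∧ ∀ x ∈ closedBall 0 (Real.exp (-T)) \ {0}, P x := by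
  obtain ⟨ε, hε, hball⟩ := (nhdsWithin_hasBasis nhds_basis_closedBall _).eventually_iff.1 hP
  refine ⟨max 0 (-Real.log ε), le_max_left _ _, fun x hx => hball ⟨?_, hx.2⟩⟩
  refine closedBall_subset_closedBall ?_ hx.1
  rw [← Real.le_log_iff_exp_le hε]
  linarith [le_max_right 0 (-Real.log ε)]

theorem stmt2_general {N : ℕ} (hN : 0 < N) {μ₁ μ₂ : ℝ} (hμ₂ : -((N : ℝ) - 2 - μ₁) ^ 2 / 4 ≤ μ₂)
    {Ω : Set (E N)} (hΩ : Ω ∈ 𝓝 0) {θ p : ℝ} (hp : 1 < p)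
    (hcrit : θ + 2 + tauPlus N μ₁ μ₂ * (p - 1) ≤ 0) {Q : E N → ℝ}
    (hQ : ∃ c > (0 : ℝ), ∀ᶠ x in 𝓝[≠] 0, c ≤ Q x * ‖x‖ ^ (-θ)) :
    ¬ ∃ u : E N → ℝ, ContDiffOn ℝ 2 u (Ω \ {0}) ∧ (∀ x ∈ Ω \ {0}, 0 < u x) ∧
        ∀ x ∈ Ω \ {0}, Q x * u x ^ p ≤ ckn N μ₁ μ₂ u x := by
  rintro ⟨u, hu, hpos, hineq⟩
  obtain ⟨c, hc, hQc⟩ := hQ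
  obtain ⟨T, hT, hball⟩ := exists_forall_closedBall_exp_neg_of_eventually
    (hQc.and (mem_nhdsWithin_of_mem_nhds (eventually_mem_nhds_iff.2 hΩ)))
  have hmem {x : E N} (hx : x ∈ closedBall 0 (Real.exp (-T)) \ {0}) : x ∈ Ω \ {0} :=
    ⟨mem_of_mem_nhds (hball x hx).2, hx.2⟩
  refine not_isEmdenSupersolution two_mul_tauPlus_nonneg hc hp T _
    (isEmdenSupersolution_emdenProfile (u := u) hN (tauPlus_isRoot hμ₂) hcrit hc hT
      (fun x hx => ?_) (fun x hx => hpos x (hmem hx)) (fun x hx => ?_))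
  · exact (hu x (hmem hx)).contDiffAt (sdiff_mem (hball x hx).2 (isOpen_ne.mem_nhds hx.2))
  · have hx0 : 0 < ‖x‖ := norm_pos_iff.2 hx.2
    have hQx : c * ‖x‖ ^ θ ≤ Q x := by
      rw [← le_div_iff₀ (by positivity), div_eq_mul_inv, ← Real.rpow_neg hx0.le]
      exact (hball x hx).1
    exact (mul_le_mul_of_nonneg_right hQx (Real.rpow_nonneg (hpos x (hmem hx)).le p)).trans
      (hineq x (hmem hx))

/-- nonexistence of positive supersolutions of the Lane–Emden
inequality `ℒ_{μ₁,μ₂} u ≥ Q u^p` in a punctured bounded domain for `p ≥ p^#`. -/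
theorem stmt2 (N : ℕ) (hN : 3 ≤ N) (μ₁ μ₂ : ℝ) (hμ₁ : μ₁ < (N : ℝ) - 2)
    (hμ₂l : -((N : ℝ) - 2 - μ₁) ^ 2 / 4 ≤ μ₂) (hμ₂u : μ₂ < 0)
    (Ω : Set (E N)) (hΩo : IsOpen Ω) (hΩc : IsConnected Ω)
    (hΩb : Bornology.IsBounded Ω) (h0Ω : (0 : E N) ∈ Ω)
    (θ : ℝ) (hθ : -2 < θ) (β : ℝ) (hβ : β ∈ Set.Ioo (0 : ℝ) 1)
    (Q : E N → ℝ) (hQreg : LocHolderOn N β Q ({(0 : E N)}ᶜ))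
    (hQpos : ∀ x : E N, x ≠ 0 → 0 < Q x)
    (hQliminf : ∃ c > (0 : ℝ), ∀ᶠ x in nhdsWithin (0 : E N) {(0 : E N)}ᶜ,
      c ≤ Q x * ‖x‖ ^ (-θ))
    (p : ℝ) (hp : 1 + (2 + θ) / (-tauPlus N μ₁ μ₂) ≤ p) :
    ¬ ∃ u : E N → ℝ, ContDiffOn ℝ 2 u (Ω \ {0}) ∧
        (∀ x ∈ Ω \ {0}, 0 < u x) ∧
        (∀ x ∈ Ω \ {0}, Q x * u x ^ p ≤ ckn N μ₁ μ₂ u x) ∧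
        (∀ x ∈ frontier Ω, 0 ≤ u x) := by
  obtain ⟨hp1, hcrit⟩ := one_lt_and_add_mul_nonpos_of_le (tauPlus_neg hμ₁ hμ₂u) hθ hp
  exact fun ⟨u, hu, hpos, hineq, _⟩ => stmt2_general (by lia) hμ₂l (hΩo.mem_nhds h0Ω) hp1 hcrit
    hQliminf ⟨u, hu, hpos, hineq⟩
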